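/- Let (Ω, ν) be a probability space and (X_k)_{k≥1} a sequence of real-valued square-integrable random variables such that X_k(ω) is nondecreasing in k for every ω, E[X_k] → ∞ as k → ∞, and sup_k Var(X_k) < ∞. Then for ν-almost every ω, X_k(ω) → ∞ as k → ∞. -/

import Mathlib

open MeasureTheory ProbabilityTheory Filter

/- By Chebyshev's inequality `ν {X k ≤ b} ≤ Var[X k] / (E[X k] - b) ^ 2` once `E[X k] > b`, and the
right-hand side tends to zero as soon as `Var[X k]` is negligible against `E[X k] ^ 2`. The event
that `b` bounds the whole family is contained in every `{X k ≤ b}`, hence is null, and a monotone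
unbounded family of reals tends to infinity. -/

open Asymptotics Set Topology

section Unbounded

variable {Ω ι β : Type*} [MeasurableSpace Ω] {μ : Measure Ω} {l : Filter ι} [l.NeBot]
  [Preorder β] {X : ι → Ω → β}

lemma ae_not_forall_le_of_tendsto_measure_le {b : β}
    (h : Tendsto (fun k ↦ μ {ω | X k ω ≤ b}) l (𝓝 0)) :
    ∀ᵐ ω ∂μ, ¬ ∀ k, X k ω ≤ b := by
  simp only [ae_iff, not_not]
  exact le_antisymm (ge_of_tendsto' h fun k ↦ measure_mono fun ω hω ↦ hω k) zero_le

lemma ae_not_bddAbove_range_of_tendsto_measure_le [(atTop : Filter β).NeBot]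
    [(atTop : Filter β).IsCountablyGenerated]
    (h : ∀ b, Tendsto (fun k ↦ μ {ω | X k ω ≤ b}) l (𝓝 0)) :
    ∀ᵐ ω ∂μ, ¬ BddAbove (range fun k ↦ X k ω) := by
  obtain ⟨u, hu⟩ := exists_seq_tendsto (atTop : Filter β)
  filter_upwards [ae_all_iff.2 fun n ↦ ae_not_forall_le_of_tendsto_measure_le (h (u n))] with ω hω
  rintro ⟨b, hb⟩
  obtain ⟨n, hn⟩ := (hu.eventually_ge_atTop b).exists
  exact hω n fun k ↦ (hb (mem_range_self k)).trans hn

end Unbounded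

section SecondMoment

variable {Ω ι : Type*} [MeasurableSpace Ω] {ν : Measure Ω} {l : Filter ι}

lemma measure_le_le_variance_div_sq [IsFiniteMeasure ν] {Y : Ω → ℝ} (hY : MemLp Y 2 ν) {b : ℝ}
    (hb : b < ν[Y]) :
    ν {ω | Y ω ≤ b} ≤ ENNReal.ofReal (Var[Y; ν] / (ν[Y] - b) ^ 2) :=
  calc ν {ω | Y ω ≤ b}
      ≤ ν {ω | ν[Y] - b ≤ |Y ω - ν[Y]|} := measure_mono fun ω (hω : Y ω ≤ b) ↦
        (sub_le_sub_left hω _).trans <| (le_abs_self _).trans_eq (abs_sub_comm _ _)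
    _ ≤ ENNReal.ofReal (Var[Y; ν] / (ν[Y] - b) ^ 2) :=
      meas_ge_le_variance_div_sq hY (sub_pos.2 hb)

lemma tendsto_div_sub_const_pow_of_isLittleO {v m : ι → ℝ} {n : ℕ} (hm : Tendsto m l atTop)
    (hv : v =o[l] fun k ↦ m k ^ n) (b : ℝ) :
    Tendsto (fun k ↦ v k / (m k - b) ^ n) l (𝓝 0) := by
  have hb : (fun _ ↦ b) =o[l] m :=
    isLittleO_const_left.2 (.inr (tendsto_norm_atTop_atTop.comp hm))
  exact (hv.trans_isBigO (hb.right_isBigO_sub.pow n)).tendsto_div_nhds_zero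

lemma tendsto_measure_le_of_variance_isLittleO [IsFiniteMeasure ν] {X : ι → Ω → ℝ}
    (hL2 : ∀ k, MemLp (X k) 2 ν) (hmean : Tendsto (fun k ↦ ν[X k]) l atTop)
    (hvar : (fun k ↦ Var[X k; ν]) =o[l] fun k ↦ ν[X k] ^ 2) (b : ℝ) :
    Tendsto (fun k ↦ ν {ω | X k ω ≤ b}) l (𝓝 0) := by
  have hbound : Tendsto (fun k ↦ ENNReal.ofReal (Var[X k; ν] / (ν[X k] - b) ^ 2)) l (𝓝 0) := by
    simpa only [ENNReal.ofReal_zero] using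
      ENNReal.tendsto_ofReal (tendsto_div_sub_const_pow_of_isLittleO hmean hvar b)
  refine tendsto_of_tendsto_of_tendsto_of_le_of_le' tendsto_const_nhds hbound
    (.of_forall fun _ ↦ zero_le) ?_
  filter_upwards [hmean.eventually_gt_atTop b] with k hk
  exact measure_le_le_variance_div_sq (hL2 k) hk

lemma variance_isLittleO_sq_of_forall_le {X : ι → Ω → ℝ} {m : ι → ℝ} {C : ℝ}
    (hm : Tendsto m l atTop) (hC : ∀ k, Var[X k; ν] ≤ C) :
    (fun k ↦ Var[X k; ν]) =o[l] fun k ↦ m k ^ 2 := by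
  have hO : (fun k ↦ Var[X k; ν]) =O[l] fun _ ↦ (1 : ℝ) := .of_bound C <| .of_forall fun k ↦ by
    simpa [abs_of_nonneg (variance_nonneg (X k) ν)] using hC k
  refine hO.trans_isLittleO (isLittleO_const_left.2 (.inr ?_))
  exact tendsto_norm_atTop_atTop.comp ((tendsto_pow_atTop two_ne_zero).comp hm)

theorem stmt1_general [Preorder ι] [(atTop : Filter ι).NeBot] [IsFiniteMeasure ν] {X : ι → Ω → ℝ}
    (hL2 : ∀ k, MemLp (X k) 2 ν) (hmono : ∀ᵐ ω ∂ν, Monotone fun k ↦ X k ω)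
    (hmean : Tendsto (fun k ↦ ν[X k]) atTop atTop)
    (hvar : (fun k ↦ Var[X k; ν]) =o[atTop] fun k ↦ ν[X k] ^ 2) :
    ∀ᵐ ω ∂ν, Tendsto (fun k ↦ X k ω) atTop atTop := by
  have hunbdd : ∀ᵐ ω ∂ν, ¬ BddAbove (range fun k ↦ X k ω) :=
    ae_not_bddAbove_range_of_tendsto_measure_le
      (tendsto_measure_le_of_variance_isLittleO hL2 hmean hvar)
  filter_upwards [hmono, hunbdd] with ω hω hω'
  exact tendsto_atTop_atTop_of_monotone' hω hω'

end SecondMoment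

/-- If `(X k)` are square-integrable real random variables on a probability
space `(Ω, ν)`, pointwise nondecreasing in `k`, with `E[X k] → ∞` and uniformly bounded
variances, then `ν`-a.s. `X k ω → ∞`. -/
theorem stmt1
    {Ω : Type*} [MeasurableSpace Ω] (ν : Measure Ω) [IsProbabilityMeasure ν]
    (X : ℕ → Ω → ℝ)
    (hL2 : ∀ k, MemLp (X k) 2 ν)
    (hmono : ∀ ω, Monotone (fun k => X k ω))
    (hmean : Tendsto (fun k => ∫ ω, X k ω ∂ν) atTop atTop)
    (hvar : ∃ C : ℝ, ∀ k, variance (X k) ν ≤ C) :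
    ∀ᵐ ω ∂ν, Tendsto (fun k => X k ω) atTop atTop := by
  obtain ⟨C, hC⟩ := hvar
  exact stmt1_general hL2 (.of_forall hmono) hmean (variance_isLittleO_sq_of_forall_le hmean hC)
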